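/- Assume ℓ_i ≥ 0 for all i and ℓ_{r_1} ≤ ℓ_{r_2} ≤ … ≤ ℓ_{r_N}. If e' is a descendant of e in the EP tree, then ζ(e) ≤ ζ(e'). -/

import Mathlib

open scoped BigOperators

/-- `j*(e)`: the (1-indexed) largest position `j` with `e_{r_j} = 1`; `j*(0) = 0`. -/
def jstar {N : ℕ} (r : Equiv.Perm (Fin N)) (e : Fin N → ZMod 2) : ℕ :=
  (Finset.univ.filter fun j : Fin N => e (r j) = 1).sup fun j => (j : ℕ) + 1

/-- The child relation of the EP tree on `F₂^N`: the root `0` has a single child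
(the vector with a `1` in coordinate `r_1`); a nonzero `e` with `j*(e) < N` has a
left child (coordinate `r_{j*}` set to `0`, coordinate `r_{j*+1}` set to `1`) and a
right child (coordinate `r_{j*+1}` set to `1`); a node with `j*(e) = N` has no children. -/
def Child {N : ℕ} (r : Equiv.Perm (Fin N)) (e c : Fin N → ZMod 2) : Prop :=
  (e = 0 ∧ ∃ h : 0 < N,
    c = Function.update (0 : Fin N → ZMod 2) (r ⟨0, h⟩) 1) ∨
  (e ≠ 0 ∧ ∃ h : jstar r e < N,
    c = Function.update
        (Function.update e (r ⟨jstar r e - 1, lt_of_le_of_lt (Nat.sub_le _ _) h⟩) 0)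
        (r ⟨jstar r e, h⟩) 1 ∨
    c = Function.update e (r ⟨jstar r e, h⟩) 1)

/-- Soft weight of an error pattern: `ζ(e) = Σ_{i : e_i = 1} ℓ_i`. -/
noncomputable def zeta {N : ℕ} (ℓ : Fin N → ℝ) (e : Fin N → ZMod 2) : ℝ :=
  ∑ i, if e i = 1 then ℓ i else 0

theorem zeta_update {N : ℕ} (ℓ : Fin N → ℝ) (e : Fin N → ZMod 2) (a : Fin N) (v : ZMod 2) :
    zeta ℓ (Function.update e a v) + (if e a = 1 then ℓ a else 0)
      = zeta ℓ e + (if v = 1 then ℓ a else 0) := by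
  unfold zeta
  rw [← Finset.add_sum_erase _ _ (Finset.mem_univ a),
    ← Finset.add_sum_erase (a := a) _ (fun i => if e i = 1 then ℓ i else 0) (Finset.mem_univ a)]
  have h : ∑ x ∈ Finset.univ.erase a, (if Function.update e a v x = 1 then ℓ x else 0)
      = ∑ x ∈ Finset.univ.erase a, (if e x = 1 then ℓ x else 0) := by
    refine Finset.sum_congr rfl fun x hx => ?_
    rw [Function.update_of_ne (Finset.ne_of_mem_erase hx)]
  rw [h, Function.update_self]
  ring

theorem zeta_update_one_ge {N : ℕ} (ℓ : Fin N → ℝ) (hnn : ∀ i, 0 ≤ ℓ i)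
    (e : Fin N → ZMod 2) (a : Fin N) :
    zeta ℓ e ≤ zeta ℓ (Function.update e a 1) := by
  have h := zeta_update ℓ e a 1
  have := hnn a
  rw [if_pos rfl] at h
  split_ifs at h <;> linarith

theorem jstar_not_one {N : ℕ} (r : Equiv.Perm (Fin N)) (e : Fin N → ZMod 2)
    (h : jstar r e < N) : e (r ⟨jstar r e, h⟩) ≠ 1 := by
  intro h1
  have hm : (⟨jstar r e, h⟩ : Fin N) ∈ Finset.univ.filter fun j : Fin N => e (r j) = 1 :=
    Finset.mem_filter.2 ⟨Finset.mem_univ _, h1⟩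
  have := Finset.le_sup (f := fun j : Fin N => (j : ℕ) + 1) hm
  change jstar r e + 1 ≤ jstar r e at this
  omega

theorem zeta_child {N : ℕ} (r : Equiv.Perm (Fin N)) (ℓ : Fin N → ℝ)
    (hnn : ∀ i, 0 ≤ ℓ i)
    (hsorted : ∀ i j : Fin N, i ≤ j → ℓ (r i) ≤ ℓ (r j))
    (e c : Fin N → ZMod 2) (hc : Child r e c) : zeta ℓ e ≤ zeta ℓ c := by
  rcases hc with ⟨rfl, h, rfl⟩ | ⟨-, h, rfl | rfl⟩
  · exact zeta_update_one_ge ℓ hnn _ _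
  · have hb := jstar_not_one r e h
    have hs := hsorted ⟨jstar r e - 1, lt_of_le_of_lt (Nat.sub_le _ _) h⟩ ⟨jstar r e, h⟩
      (Fin.mk_le_mk.2 (Nat.sub_le _ _))
    generalize r ⟨jstar r e - 1, lt_of_le_of_lt (Nat.sub_le _ _) h⟩ = a at *
    generalize r ⟨jstar r e, h⟩ = b at *
    have h1 := zeta_update ℓ e a 0
    have h2 := zeta_update ℓ (Function.update e a 0) b 1
    have hb' : Function.update e a 0 b ≠ 1 := by
      rw [Function.update_apply]
      split_ifs
      · exact zero_ne_one
      · exact hb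
    rw [if_neg hb', if_pos rfl] at h2
    rw [if_neg zero_ne_one] at h1
    have := hnn a
    split_ifs at h1 <;> linarith
  · exact zeta_update_one_ge ℓ hnn _ _

/-- with nonnegative reliabilities sorted along `r`, if `e'` is a
descendant of `e` in the EP tree then `ζ(e) ≤ ζ(e')`. -/
theorem stmt10 {N : ℕ} (r : Equiv.Perm (Fin N)) (ℓ : Fin N → ℝ)
    (hnn : ∀ i, 0 ≤ ℓ i)
    (hsorted : ∀ i j : Fin N, i ≤ j → ℓ (r i) ≤ ℓ (r j))
    (e e' : Fin N → ZMod 2) (hdesc : Relation.TransGen (Child r) e e') :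
    zeta ℓ e ≤ zeta ℓ e' := by
  induction hdesc with
  | single h => exact zeta_child r ℓ hnn hsorted _ _ h
  | tail _ h ih => exact ih.trans (zeta_child r ℓ hnn hsorted _ _ h)
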